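/- Let Ω ⊂ ℝ^N (N ≥ 1) be a bounded domain, let m : Ω → ℝ be bounded continuous, and let f satisfy H1 with constants k₂ > 0 and p ∈ (0,1). Suppose Φ ∈ C(Ω̄) ∩ C²(Ω) satisfies Φ ≥ 0 in Ω and -ΔΦ = m⁺ pointwise in Ω. Then for every k > 0 with k^{1-p} ≥ k₂ (1 + sup_Ω Φ)^p, the function u := k(Φ + 1) satisfies -Δu ≥ m f(u) pointwise in Ω, i.e. u is a supersolution of -Δu = m f(u). (Supersolution construction from the proof of Lemma 2.2 and Remark 2.3.) -/

import Mathlib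

/-!
Since `Δ` is linear and kills constants, `-Δu = k (-ΔΦ) = k m⁺`. On the other side, `H1` gives
`f (k (Φ + 1)) ≤ k₂ k^p (1 + sup Φ)^p ≤ k^p k^(1-p) = k`, so `m f(u) ≤ m⁺ f(u) ≤ k m⁺`,
using `f(u) ≥ 0`. The supremum is an honest one because `Φ` is continuous on the compact
set `closure Ω`.
-/

open MeasureTheory Metric Set Bornology

/-- The Laplacian of `u : ℝ^N → ℝ`, as the sum of the second partial derivatives. -/
noncomputable def lap {N : ℕ} (u : EuclideanSpace ℝ (Fin N) → ℝ)
    (x : EuclideanSpace ℝ (Fin N)) : ℝ :=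
  ∑ i : Fin N,
    fderiv ℝ (fun y => fderiv ℝ u y (EuclideanSpace.single i 1)) x (EuclideanSpace.single i 1)

/-- Hypothesis H1: `f : [0,∞) → [0,∞)` is continuous, nondecreasing, and
`k₁ ξ^p ≤ f ξ ≤ k₂ ξ^p` for all `ξ ≥ 0`, with `k₁, k₂ > 0` and `p ∈ (0,1)`. -/
def SatisfiesH1 (f : ℝ → ℝ) (k₁ k₂ p : ℝ) : Prop :=
  ContinuousOn f (Set.Ici 0) ∧ MonotoneOn f (Set.Ici 0) ∧
  0 < k₁ ∧ 0 < k₂ ∧ 0 < p ∧ p < 1 ∧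
  ∀ ξ : ℝ, 0 ≤ ξ → k₁ * ξ ^ p ≤ f ξ ∧ f ξ ≤ k₂ * ξ ^ p

/-- No differentiability is needed: multiplication by a constant commutes with `fderiv` over a
field even where the junk value `0` is taken. -/
lemma lap_const_mul_add_one {N : ℕ} (k : ℝ) (u : EuclideanSpace ℝ (Fin N) → ℝ)
    (x : EuclideanSpace ℝ (Fin N)) :
    lap (fun y => k * (u y + 1)) x = k * lap u x := by
  have first (y : EuclideanSpace ℝ (Fin N)) :
      fderiv ℝ (fun z => k * (u z + 1)) y = k • fderiv ℝ u y := by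
    have h := congrFun (fderiv_const_smul_field (𝕜 := ℝ) (f := fun z => u z + 1) k) y
    rw [Pi.smul_apply, fderiv_add_const] at h
    exact h
  unfold lap
  rw [Finset.mul_sum]
  refine Finset.sum_congr rfl fun i _ => ?_
  have second := congrFun (fderiv_const_smul_field (𝕜 := ℝ)
    (f := fun y => fderiv ℝ u y (EuclideanSpace.single i 1)) k) x
  simp only [first]
  exact congrArg (fun L => L (EuclideanSpace.single i 1)) second

/-- `k` dominates `f(u)`, given any upper bound `S` for the value of `Φ` at the point. -/
lemma nonlinearity_le {f : ℝ → ℝ} {k₁ k₂ p k t S : ℝ} (hf : SatisfiesH1 f k₁ k₂ p)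
    (hk : 0 < k) (ht : 0 ≤ t) (htS : t ≤ S) (hkge : k₂ * (1 + S) ^ p ≤ k ^ (1 - p)) :
    f (k * (t + 1)) ≤ k := by
  obtain ⟨-, -, -, hk₂, hp, -, hbound⟩ := hf
  calc f (k * (t + 1)) ≤ k₂ * (k * (t + 1)) ^ p := (hbound _ (by positivity)).2
    _ = k ^ p * (k₂ * (1 + t) ^ p) := by
        rw [Real.mul_rpow hk.le (by positivity), add_comm t 1]; ring
    _ ≤ k ^ p * (k₂ * (1 + S) ^ p) := by gcongr
    _ ≤ k ^ p * k ^ (1 - p) := by gcongr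
    _ = k := by rw [← Real.rpow_add hk]; simp

/-- **Supersolution construction (proof of Lemma 2.2 and Remark 2.3).** If `-ΔΦ = m⁺`,
`Φ ≥ 0` in `Ω`, and `k > 0` satisfies `k^{1-p} ≥ k₂ (1 + sup_Ω Φ)^p`, then `u := k(Φ + 1)`
is a supersolution of `-Δu = m f(u)` in `Ω`. -/
theorem supersolution_construction {N : ℕ} (hN : 1 ≤ N)
    (Ω : Set (EuclideanSpace ℝ (Fin N))) (hΩopen : IsOpen Ω) (hΩconn : IsConnected Ω)
    (hΩbdd : IsBounded Ω)
    (m : EuclideanSpace ℝ (Fin N) → ℝ) (hmcont : ContinuousOn m Ω)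
    (hmbdd : ∃ C : ℝ, ∀ x ∈ Ω, |m x| ≤ C)
    (f : ℝ → ℝ) (k₁ k₂ p : ℝ) (hf : SatisfiesH1 f k₁ k₂ p)
    (Φ : EuclideanSpace ℝ (Fin N) → ℝ)
    (hΦcont : ContinuousOn Φ (closure Ω)) (hΦC2 : ContDiffOn ℝ 2 Φ Ω)
    (hΦnonneg : ∀ x ∈ Ω, 0 ≤ Φ x)
    (hΦeq : ∀ x ∈ Ω, -lap Φ x = max (m x) 0)
    (k : ℝ) (hk : 0 < k)
    (hkge : k₂ * (1 + sSup (Φ '' Ω)) ^ p ≤ k ^ (1 - p)) :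
    ∀ x ∈ Ω, m x * f (k * (Φ x + 1)) ≤ -lap (fun y => k * (Φ y + 1)) x := by
  intro x hx
  have hbdd : BddAbove (Φ '' Ω) :=
    (hΩbdd.isCompact_closure.bddAbove_image hΦcont).mono (image_mono subset_closure)
  have hle : f (k * (Φ x + 1)) ≤ k :=
    nonlinearity_le hf hk (hΦnonneg x hx) (le_csSup hbdd (mem_image_of_mem Φ hx)) hkge
  have hnn : 0 ≤ f (k * (Φ x + 1)) := by
    obtain ⟨-, -, hk₁, -, -, -, hbound⟩ := hf
    have hu : 0 ≤ k * (Φ x + 1) := mul_nonneg hk.le (by linarith [hΦnonneg x hx])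
    exact le_trans (by positivity) (hbound _ hu).1
  calc m x * f (k * (Φ x + 1)) ≤ max (m x) 0 * f (k * (Φ x + 1)) :=
        mul_le_mul_of_nonneg_right (le_max_left _ _) hnn
    _ ≤ max (m x) 0 * k := mul_le_mul_of_nonneg_left hle (le_max_right _ _)
    _ = -lap (fun y => k * (Φ y + 1)) x := by
        rw [lap_const_mul_add_one, ← hΦeq x hx]; ring
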